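/- For all n ≥ 1, the number of lattice points in the relative interior of P_n(132,312) (its interior within its affine span) equals the number of derangements of an (n−1)-element set; that is, |relint(P_n(132,312)) ∩ ℤ^n| = #{τ ∈ S_{n−1} : τ(i) ≠ i for all i}. -/

import Mathlib

open Pointwise

/-- `σ` contains the pattern `π`. -/
def containsPattern {n k : ℕ} (σ : Equiv.Perm (Fin n)) (π : Equiv.Perm (Fin k)) : Prop :=
  ∃ f : Fin k → Fin n, StrictMono f ∧ ∀ a b : Fin k, σ (f a) < σ (f b) ↔ π a < π b

/-- The pattern 132. -/
def p132 : Equiv.Perm (Fin 3) := Equiv.swap 1 2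
/-- The pattern 312. -/
def p312 : Equiv.Perm (Fin 3) := (finRotate 3)⁻¹

/-- The point `(σ(1), …, σ(n)) ∈ ℝ^n` (one-based values). -/
def permPoint {n : ℕ} (σ : Equiv.Perm (Fin n)) : Fin n → ℝ := fun i => ((σ i : ℕ) : ℝ) + 1

/-- The polytope `P_n(132,312)`. -/
def P132312 (n : ℕ) : Set (Fin n → ℝ) :=
  convexHull ℝ (permPoint ''
    {σ : Equiv.Perm (Fin n) | ¬ containsPattern σ p132 ∧ ¬ containsPattern σ p312})

def Good (m : ℕ) (b : ℤ) (g : ℕ → ℤ) : Prop :=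
  g m = b ∧ (∀ j, m < j → g j = 0) ∧ ∀ j, j < m →
    0 < ((j:ℤ)+2) * g j - (j+1) * g (j+1) ∧ ((j:ℤ)+2) * g j - (j+1) * g (j+1) < (j+1)*(j+2)

theorem good_step (m : ℕ) (b : ℤ) (C : Finset ℤ)
    (hC : ∀ c, c ∈ C ↔ 0 < ((m:ℤ)+2) * c - (m+1) * b ∧ ((m:ℤ)+2) * c - (m+1) * b < (m+1)*(m+2))
    (s : ℤ → Finset (ℕ → ℤ)) (hs : ∀ c g, g ∈ s c ↔ Good m c g) :
    ∃ t : Finset (ℕ → ℤ), (∀ g, g ∈ t ↔ Good (m+1) b g) ∧ t.card = ∑ c ∈ C, (s c).card := by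
  classical
  refine ⟨C.biUnion fun c => (s c).image fun g => Function.update g (m+1) b, ?_, ?_⟩
  · intro g
    simp only [Finset.mem_biUnion, Finset.mem_image, hs, hC]
    constructor
    · rintro ⟨c, hc, f, ⟨h1, h2, h3⟩, rfl⟩
      refine ⟨by simp, ?_, ?_⟩
      · intro j hj
        rw [Function.update_of_ne (by omega)]
        exact h2 j (by omega)
      · intro j hj
        rw [Function.update_of_ne (by omega)]
        rcases Nat.lt_succ_iff_lt_or_eq.mp hj with h | rfl
        · rw [Function.update_of_ne (by omega)]
          exact h3 j h
        · simpa [h1] using hc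
    · rintro ⟨h1, h2, h3⟩
      refine ⟨g m, ?_, Function.update g (m+1) 0, ⟨?_, ?_, ?_⟩, ?_⟩
      · have := h3 m (by omega)
        rwa [h1] at this
      · rw [Function.update_of_ne (by omega)]
      · intro j hj
        by_cases h : j = m+1
        · subst h; simp
        · rw [Function.update_of_ne h]
          exact h2 j (by omega)
      · intro j hj
        rw [Function.update_of_ne (by omega), Function.update_of_ne (by omega)]
        exact h3 j (by omega)
      · rw [Function.update_idem, ← h1, Function.update_eq_self]
  · rw [Finset.card_biUnion]
    · refine Finset.sum_congr rfl fun c hc => ?_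
      apply Finset.card_image_of_injOn
      intro f hf g hg hfg
      have hf := (hs _ _).1 hf
      have hg := (hs _ _).1 hg
      funext j
      by_cases h : j = m+1
      · rw [hf.2.1 j (by omega), hg.2.1 j (by omega)]
      · have := congrFun hfg j
        simpa [Function.update_of_ne h] using this
    · intro c _ d _ hcd
      show Disjoint _ _
      rw [Finset.disjoint_left]
      intro f hf hg
      simp only [Finset.mem_image, hs] at hf hg
      obtain ⟨f1, h1, e1⟩ := hf
      obtain ⟨f2, h2, e2⟩ := hg
      apply hcd
      rw [← h1.1, ← h2.1]
      have := congrFun (e1.trans e2.symm) m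
      simpa [Function.update_of_ne] using this

theorem good_card (m : ℕ) : ∀ b : ℤ, ∃ t : Finset (ℕ → ℤ), (∀ g, g ∈ t ↔ Good m b g) ∧
    t.card = if ((m:ℤ)+1) ∣ b then numDerangements m
      else numDerangements m + numDerangements (m-1) := by
  induction m with
  | zero =>
    intro b
    refine ⟨{fun j => if j = 0 then b else 0}, ?_, by simp⟩
    intro g
    simp only [Finset.mem_singleton, Good]
    constructor
    · rintro rfl
      refine ⟨by simp, fun j hj => by simp; omega, fun j hj => by omega⟩
    · rintro ⟨h1, h2, -⟩
      funext j
      split_ifs with h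
      · rw [h, h1]
      · exact h2 j (by omega)
  | succ m ih =>
    choose s hs hcard using ih
    have hD : numDerangements (m+1) = m * (numDerangements m + numDerangements (m-1)) + 0 := by
      cases m with
      | zero => simp
      | succ k => rw [numDerangements_add_two]; simp; ring
    intro b
    have hsum : ∀ C : Finset ℤ, ∑ c ∈ C, (s c).card =
        (C.filter fun c => ((m:ℤ)+1) ∣ c).card * numDerangements m +
        (C.filter fun c => ¬ ((m:ℤ)+1) ∣ c).card * (numDerangements m + numDerangements (m-1)) := by
      intro C
      rw [Finset.sum_congr rfl fun c _ => hcard c, Finset.sum_ite]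
      simp
    push_cast
    have hm2 : (0:ℤ) < m + 2 := by positivity
    have hm1 : (0:ℤ) < m + 1 := by positivity
    split_ifs with hb
    · obtain ⟨t, rfl⟩ := hb
      obtain ⟨T, hT1, hT2⟩ := good_step m (((m:ℤ)+1+1)*t)
        (Finset.Ioo (((m:ℤ)+1)*t) ((m+1)*t + (m+1))) (by
          intro c
          rw [Finset.mem_Ioo]
          constructor
          · rintro ⟨h1, h2⟩
            constructor <;> nlinarith
          · rintro ⟨h1, h2⟩
            constructor <;> nlinarith) s hs
      refine ⟨T, hT1, ?_⟩
      have h0 : ((Finset.Ioo (((m:ℤ)+1)*t) ((m+1)*t + (m+1))).filter fun c => ((m:ℤ)+1) ∣ c) = ∅ := by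
        rw [Finset.filter_eq_empty_iff]
        rintro c hc ⟨d, rfl⟩
        rw [Finset.mem_Ioo] at hc
        have h1 : t < d := lt_of_mul_lt_mul_left hc.1 hm1.le
        have h2 : d < t + 1 := lt_of_mul_lt_mul_left (by linarith [hc.2]) hm1.le
        omega
      have hc := Finset.card_filter_add_card_filter_not (s := (Finset.Ioo (((m:ℤ)+1)*t) ((m+1)*t + (m+1)))) (fun c => ((m:ℤ)+1) ∣ c)
      rw [h0, Int.card_Ioo, Finset.card_empty] at hc
      rw [hT2, hsum, h0, hD, Finset.card_empty]
      have : (Finset.filter (fun c => ¬ ((m:ℤ)+1) ∣ c) (Finset.Ioo (((m:ℤ)+1)*t) ((m+1)*t + (m+1)))).card = m := by omega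
      rw [this]; ring
    · set q := ((m:ℤ)+1) * b / (m+2) with hq
      have hr0 := Int.emod_nonneg (((m:ℤ)+1) * b) hm2.ne'
      have hr1 := Int.emod_lt_of_pos (((m:ℤ)+1) * b) hm2
      have hqr := Int.mul_ediv_add_emod (((m:ℤ)+1) * b) (m+2)
      rw [← hq] at hqr
      have hrne : ((m:ℤ)+1) * b % (m+2) ≠ 0 := by
        intro h
        apply hb
        have h1 : ((m:ℤ)+2) ∣ (m+1) * b := Int.dvd_of_emod_eq_zero h
        have h2 : b = (m+2) * b - (m+1) * b := by ring
        rw [h2, show (m:ℤ)+1+1 = m+2 by ring]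
        exact dvd_sub (dvd_mul_right _ _) h1
      set r := ((m:ℤ)+1) * b % (m+2)
      have hr2 : 0 < r := lt_of_le_of_ne hr0 hrne.symm
      obtain ⟨T, hT1, hT2⟩ := good_step m b
        (Finset.Ioc q (q + (m+1))) (by
          intro c
          rw [Finset.mem_Ioc, ← hqr]
          constructor
          · rintro ⟨h1, h2⟩
            constructor <;> nlinarith
          · rintro ⟨h1, h2⟩
            constructor
            · by_contra! h
              nlinarith
            · by_contra! h
              have : q + (m+1) + 1 ≤ c := h
              nlinarith) s hs
      refine ⟨T, hT1, ?_⟩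
      have h0 : ((Finset.Ioc q (q + (m+1))).filter fun c => ((m:ℤ)+1) ∣ c).card = 1 := by
        rw [Finset.card_eq_one]
        have e1 := Int.mul_ediv_add_emod q (m+1)
        have e2 := Int.emod_nonneg q hm1.ne'
        have e3 := Int.emod_lt_of_pos q hm1
        refine ⟨((m:ℤ)+1) * (q/(m+1) + 1), ?_⟩
        ext c
        rw [Finset.mem_filter, Finset.mem_Ioc, Finset.mem_singleton]
        constructor
        · rintro ⟨⟨h1, h2⟩, d, rfl⟩
          have h3 : q/(m+1) < d := lt_of_mul_lt_mul_left (a := (m:ℤ)+1) (by linarith) hm1.le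
          have h4 : d < q/(m+1) + 2 := lt_of_mul_lt_mul_left (a := (m:ℤ)+1) (by linarith) hm1.le
          have : d = q/(m+1) + 1 := by omega
          rw [this]
        · rintro rfl
          exact ⟨⟨by linarith, by linarith⟩, dvd_mul_right _ _⟩
      have hc := Finset.card_filter_add_card_filter_not (s := (Finset.Ioc q (q + (m+1)))) (fun c => ((m:ℤ)+1) ∣ c)
      rw [h0, Int.card_Ioc] at hc
      rw [hT2, hsum, h0, hD]
      have : (Finset.filter (fun c => ¬ ((m:ℤ)+1) ∣ c) (Finset.Ioc q (q + (m+1)))).card = m := by omega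
      rw [this]; simp; ring

theorem intInt_image {E V : Type*} [NormedAddCommGroup E] [NormedSpace ℝ E]
    [NormedAddCommGroup V] [NormedSpace ℝ V] (f : E →ᵃ[ℝ] V) (hf : Continuous f) (g : V → E)
    (hg : Continuous g) (hgf : ∀ e, g (f e) = e) (s : Set E) (hs : affineSpan ℝ s = ⊤) :
    intrinsicInterior ℝ (f '' s) = f '' interior s := by
  have hspan : ∀ v, v ∈ affineSpan ℝ (f '' s) ↔ ∃ e, f e = v := by
    intro v
    rw [← AffineSubspace.map_span, hs]
    simp [AffineSubspace.mem_map]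
  let φ : E ≃ₜ affineSpan ℝ (f '' s) :=
    { toFun := fun e => ⟨f e, (hspan _).2 ⟨e, rfl⟩⟩
      invFun := fun v => g v
      left_inv := hgf
      right_inv := by
        rintro ⟨v, hv⟩
        obtain ⟨e, rfl⟩ := (hspan v).1 hv
        simp [hgf]
      continuous_toFun := by fun_prop
      continuous_invFun := by fun_prop }
  have hinj : Function.Injective f := Function.LeftInverse.injective hgf
  have key : interior s = φ ⁻¹' interior ((↑) ⁻¹' (f '' s)) := by
    rw [φ.preimage_interior]
    congr 1
    ext e
    simp [φ, hinj.eq_iff]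
  rw [key]
  ext v
  rw [mem_intrinsicInterior]
  constructor
  · rintro ⟨y, hy, rfl⟩
    refine ⟨φ.symm y, by simpa using hy, ?_⟩
    exact congrArg Subtype.val (φ.apply_symm_apply y)
  · rintro ⟨e, he, rfl⟩
    exact ⟨φ e, he, rfl⟩

theorem avoid_iff {n : ℕ} (σ : Equiv.Perm (Fin n)) :
    (¬ containsPattern σ p132 ∧ ¬ containsPattern σ p312) ↔
    ∀ i j k : Fin n, i < j → j < k → ¬ (σ i < σ k ∧ σ k < σ j) ∧ ¬ (σ j < σ k ∧ σ k < σ i) := by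
  have a1 : p132 0 < p132 2 := by decide
  have a2 : p132 2 < p132 1 := by decide
  have b1 : p312 1 < p312 2 := by decide
  have b2 : p312 2 < p312 0 := by decide
  have hmono : ∀ i j k : Fin n, i < j → j < k → StrictMono ![i, j, k] := by
    intro i j k hij hjk
    rw [Fin.strictMono_iff_lt_succ]
    intro t
    fin_cases t
    · exact hij
    · exact hjk
  constructor
  · rintro ⟨h1, h2⟩ i j k hij hjk
    constructor
    · rintro ⟨h3, h4⟩
      refine h1 ⟨![i, j, k], hmono i j k hij hjk, ?_⟩
      have h5 := h3.trans h4
      intro a b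
      fin_cases a <;> fin_cases b <;> simp [p132, Equiv.swap_apply_def, h3, h4, h5, h3.le, h4.le, h5.le]
    · rintro ⟨h3, h4⟩
      refine h2 ⟨![i, j, k], hmono i j k hij hjk, ?_⟩
      have h5 := h3.trans h4
      have c0 : p312 0 = 2 := by decide
      have c1 : p312 1 = 0 := by decide
      have c2 : p312 2 = 1 := by decide
      intro a b
      fin_cases a <;> fin_cases b <;> simp [c0, c1, c2, h3, h4, h5, h3.le, h4.le, h5.le]
  · intro h
    constructor
    · rintro ⟨f, hf, hp⟩
      exact (h (f 0) (f 1) (f 2) (hf (by decide)) (hf (by decide))).1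
        ⟨(hp 0 2).2 a1, (hp 2 1).2 a2⟩
    · rintro ⟨f, hf, hp⟩
      exact (h (f 0) (f 1) (f 2) (hf (by decide)) (hf (by decide))).2
        ⟨(hp 1 2).2 b1, (hp 2 0).2 b2⟩

/-- Tail sums. -/
def tailS (m k : ℕ) : (Fin m → ℝ) →ₗ[ℝ] ℝ :=
  ∑ i ∈ Finset.univ.filter (fun i : Fin m => k ≤ i), LinearMap.proj i

theorem tailS_apply (m k : ℕ) (e : Fin m → ℝ) :
    tailS m k e = ∑ i ∈ Finset.univ.filter (fun i : Fin m => k ≤ i), e i := by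
  simp [tailS]

theorem tailS_top (m k : ℕ) (h : m ≤ k) (e : Fin m → ℝ) : tailS m k e = 0 := by
  rw [tailS_apply, Finset.filter_false_of_mem, Finset.sum_empty]
  intro i _
  omega

theorem tailS_succ (m k : ℕ) (h : k < m) (e : Fin m → ℝ) :
    tailS m k e = tailS m (k+1) e + e ⟨k, h⟩ := by
  rw [tailS_apply, tailS_apply]
  have : Finset.univ.filter (fun i : Fin m => k ≤ i) =
      insert ⟨k, h⟩ (Finset.univ.filter (fun i : Fin m => k + 1 ≤ i)) := by
    ext i
    simp [Fin.ext_iff]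
    omega
  rw [this, Finset.sum_insert (by simp)]
  ring

/-- The parametrisation of the polytope by the cube. -/
noncomputable def cubeMap (m : ℕ) : (Fin m → ℝ) →ᵃ[ℝ] (Fin (m+1) → ℝ) :=
  (LinearMap.pi fun j : Fin (m+1) => ((j:ℕ):ℝ) • tailS m (j-1) - (((j:ℕ):ℝ)+1) • tailS m j).toAffineMap +
    AffineMap.const ℝ _ (fun j : Fin (m+1) => (m:ℝ)+1-((j:ℕ):ℝ))

theorem cubeMap_apply (m : ℕ) (e : Fin m → ℝ) (j : Fin (m+1)) :
    cubeMap m e j = (m:ℝ)+1-((j:ℕ):ℝ) + ((j:ℕ):ℝ) * tailS m (j-1) e - (((j:ℕ):ℝ)+1) * tailS m j e := by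
  simp [cubeMap]
  ring

theorem cubeMap_zero (m : ℕ) (e : Fin m → ℝ) :
    cubeMap m e 0 = (m:ℝ) + 1 - tailS m 0 e := by
  simp [cubeMap_apply]

theorem cubeMap_succ (m : ℕ) (e : Fin m → ℝ) (k : Fin m) :
    cubeMap m e k.succ = (m:ℝ) - k - tailS m (k+1) e + (k+1) * e k := by
  rw [cubeMap_apply]
  simp only [Fin.val_succ, Nat.add_sub_cancel]
  rw [tailS_succ m k k.2]
  push_cast
  ring

theorem tailS_bd (m : ℕ) (e : Fin m → ℝ) (he : ∀ i, 0 ≤ e i ∧ e i ≤ 1) (i d : ℕ) (h : i + d ≤ m) :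
    0 ≤ tailS m i e - tailS m (i+d) e ∧ tailS m i e - tailS m (i+d) e ≤ d := by
  induction d with
  | zero => simp
  | succ d ih =>
    have h1 := ih (by omega)
    have h2 := tailS_succ m (i+d) (by omega) e
    have h3 := he ⟨i+d, by omega⟩
    rw [← add_assoc]
    push_cast
    constructor <;> linarith

theorem cubeMap_bd (m : ℕ) (e : Fin m → ℝ) (he : ∀ i, 0 ≤ e i ∧ e i ≤ 1) (j : Fin (m+1)) :
    (m:ℝ) + 1 - (j:ℕ) - tailS m j e ≤ cubeMap m e j ∧
    cubeMap m e j ≤ (m:ℝ) + 1 - tailS m j e := by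
  cases j using Fin.cases with
  | zero => rw [cubeMap_zero]; simp
  | succ k =>
    rw [cubeMap_succ]
    have := he k
    simp only [Fin.val_succ]
    push_cast
    have h0 : (0:ℝ) ≤ k := by positivity
    constructor <;> nlinarith

theorem cubeMap_order (m : ℕ) (e : Fin m → ℝ) (he : ∀ i, e i = 0 ∨ e i = 1) (i : Fin (m+1))
    (k : Fin m) (hik : i < k.succ) :
    (e k = 1 → cubeMap m e i + 1 ≤ cubeMap m e k.succ) ∧
    (e k = 0 → cubeMap m e k.succ + 1 ≤ cubeMap m e i) := by
  have he' : ∀ i, 0 ≤ e i ∧ e i ≤ 1 := by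
    intro i
    rcases he i with h | h <;> rw [h] <;> norm_num
  have h1 := cubeMap_bd m e he' i
  have h2 := cubeMap_succ m e k
  have h3 := tailS_succ m k k.2 e
  have hlt : (i:ℕ) < k + 1 := by simpa [Fin.lt_def] using hik
  obtain ⟨d, hd⟩ := Nat.exists_eq_add_of_le (Nat.lt_succ_iff.mp hlt)
  have h4 := tailS_bd m e he' i d (by omega)
  rw [← hd] at h4
  have hd' : (k:ℝ) = (i:ℕ) + d := by exact_mod_cast hd
  constructor
  · intro h
    simp only [Fin.eta] at h3
    rw [h] at h2 h3
    linarith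
  · intro h
    simp only [Fin.eta] at h3
    rw [h] at h2 h3
    linarith

theorem cubeMap_int (m : ℕ) (e : Fin m → ℝ) (he : ∀ i, e i = 0 ∨ e i = 1) (j : Fin (m+1)) :
    ∃ a : Fin (m+1), cubeMap m e j = ((a:ℕ):ℝ) + 1 := by
  have he' : ∀ i, 0 ≤ e i ∧ e i ≤ 1 := by
    intro i
    rcases he i with h | h <;> rw [h] <;> norm_num
  have hz : ∀ k, ∃ z : ℤ, tailS m k e = z := by
    intro k
    have : ∀ i, ∃ z : ℤ, e i = z := by
      intro i
      rcases he i with h | h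
      · exact ⟨0, by simp [h]⟩
      · exact ⟨1, by simp [h]⟩
    choose z hz using this
    refine ⟨∑ i ∈ Finset.univ.filter (fun i : Fin m => k ≤ i), z i, ?_⟩
    rw [tailS_apply]
    push_cast
    exact Finset.sum_congr rfl fun i _ => hz i
  choose z hz using hz
  have hb := cubeMap_bd m e he' j
  have hs := tailS_bd m e he' j (m - j) (by omega)
  rw [tailS_top m (j + (m - j)) (by omega)] at hs
  have hcast : ((m - (j:ℕ) : ℕ) : ℝ) = m - (j:ℕ) := by
    rw [Nat.cast_sub (by omega)]
  rw [hcast] at hs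
  have hint : cubeMap m e j = (((m:ℤ)+1-(j:ℕ) + (j:ℕ) * z (j-1) - ((j:ℕ)+1) * z j : ℤ) : ℝ) := by
    rw [cubeMap_apply, hz, hz]
    push_cast
    ring
  set w : ℤ := (m:ℤ)+1-(j:ℕ) + (j:ℕ) * z (j-1) - ((j:ℕ)+1) * z j
  have w1 : 1 ≤ w := by
    have : (1:ℝ) ≤ w := by rw [← hint]; linarith
    exact_mod_cast this
  have w2 : w ≤ m + 1 := by
    have : (w:ℝ) ≤ m + 1 := by rw [← hint]; linarith
    exact_mod_cast this
  refine ⟨⟨(w-1).toNat, by omega⟩, ?_⟩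
  rw [hint]
  have : ((w-1).toNat : ℤ) = w - 1 := Int.toNat_of_nonneg (by omega)
  have h2 : (((w-1).toNat : ℤ) : ℝ) = w - 1 := by rw [this]; push_cast; ring
  simp only [Int.cast_natCast] at h2
  rw [h2]; ring

theorem exists_perm (m : ℕ) (e : Fin m → ℝ) (he : ∀ i, e i = 0 ∨ e i = 1) :
    ∃ σ : Equiv.Perm (Fin (m+1)), permPoint σ = cubeMap m e ∧
      ∀ (i : Fin (m+1)) (k : Fin m), i < k.succ →
        (e k = 1 → σ i < σ k.succ) ∧ (e k = 0 → σ k.succ < σ i) := by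
  choose a ha using cubeMap_int m e he
  have hord : ∀ (i : Fin (m+1)) (k : Fin m), i < k.succ →
        (e k = 1 → a i < a k.succ) ∧ (e k = 0 → a k.succ < a i) := by
    intro i k hik
    have := cubeMap_order m e he i k hik
    rw [ha, ha] at this
    constructor
    · intro h
      have h1 := this.1 h
      rw [Fin.lt_def]
      have : ((a i : ℕ) : ℝ) < (a k.succ : ℕ) := by linarith
      exact_mod_cast this
    · intro h
      have h1 := this.2 h
      rw [Fin.lt_def]
      have : ((a k.succ : ℕ) : ℝ) < (a i : ℕ) := by linarith
      exact_mod_cast this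
  have hne : ∀ i k, i < k → a i ≠ a k := by
    intro i k hik
    cases k using Fin.cases with
    | zero => simp at hik
    | succ k =>
      rcases he k with h | h
      · exact ((hord i k hik).2 h).ne'
      · exact ((hord i k hik).1 h).ne
  have hinj : Function.Injective a := by
    intro i k h
    rcases lt_trichotomy i k with h1 | h1 | h1
    · exact absurd h (hne _ _ h1)
    · exact h1
    · exact absurd h.symm (hne _ _ h1)
  refine ⟨Equiv.ofBijective a (Finite.injective_iff_bijective.mp hinj), ?_, ?_⟩
  · funext j
    simp [permPoint, ha]
  · simpa using hord

theorem perm_eq_of_order {n : ℕ} (σ τ : Equiv.Perm (Fin n))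
    (h : ∀ i k, i < k → ((σ i < σ k ∧ τ i < τ k) ∨ (σ k < σ i ∧ τ k < τ i))) : σ = τ := by
  have hm : StrictMono (fun x => τ (σ.symm x)) := by
    intro x y hxy
    rcases lt_trichotomy (σ.symm x) (σ.symm y) with h1 | h1 | h1
    · rcases h _ _ h1 with h2 | h2
      · exact h2.2
      · simp at h2
        exact absurd hxy (not_lt.2 h2.1.le)
    · exact absurd (σ.symm.injective h1) hxy.ne
    · rcases h _ _ h1 with h2 | h2
      · simp at h2
        exact absurd hxy (not_lt.2 h2.1.le)
      · exact h2.2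
  have hid : ∀ x, τ (σ.symm x) = x := by
    let f : Fin n ≃o Fin n := StrictMono.orderIsoOfSurjective _ hm (τ.surjective.comp σ.symm.surjective)
    have : f = OrderIso.refl _ := Subsingleton.elim _ _
    intro x
    exact congrArg (fun g : Fin n ≃o Fin n => g x) this
  ext i
  have := hid (σ i)
  simp at this
  rw [this]

theorem vertices_eq (m : ℕ) :
    permPoint '' {σ : Equiv.Perm (Fin (m+1)) | ¬ containsPattern σ p132 ∧ ¬ containsPattern σ p312} =
    cubeMap m '' (Set.univ.pi fun _ => ({0, 1} : Set ℝ)) := by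
  ext x
  constructor
  · rintro ⟨σ, hσ, rfl⟩
    rw [Set.mem_ofPred_eq, avoid_iff] at hσ
    classical
    let e : Fin m → ℝ := fun k => if σ 0 < σ k.succ then 1 else 0
    have he : ∀ i, e i = 0 ∨ e i = 1 := by
      intro i
      by_cases h : σ 0 < σ i.succ <;> simp [e, h]
    obtain ⟨τ, h1, h2⟩ := exists_perm m e he
    refine ⟨e, by simpa using he, ?_⟩
    rw [← h1]
    congr 1
    symm
    apply perm_eq_of_order
    intro i k hik
    cases k using Fin.cases with
    | zero => simp at hik
    | succ k =>
      have hne : σ i ≠ σ k.succ := fun h => hik.ne (σ.injective h)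
      have hne0 : σ 0 ≠ σ k.succ := fun h => (Fin.succ_ne_zero k).symm (σ.injective h)
      by_cases h : σ 0 < σ k.succ
      · left
        refine ⟨?_, (h2 i k hik).1 (by simp [e, h])⟩
        by_cases hi : i = 0
        · rw [hi]; exact h
        · by_contra hc
          exact (hσ 0 i k.succ (Fin.pos_of_ne_zero hi) hik).1
            ⟨h, lt_of_le_of_ne (not_lt.1 hc) hne.symm⟩
      · right
        have h' : σ k.succ < σ 0 := lt_of_le_of_ne (not_lt.1 h) hne0.symm
        refine ⟨?_, (h2 i k hik).2 (by simp [e, h])⟩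
        by_cases hi : i = 0
        · rw [hi]; exact h'
        · by_contra hc
          exact (hσ 0 i k.succ (Fin.pos_of_ne_zero hi) hik).2
            ⟨lt_of_le_of_ne (not_lt.1 hc) hne, h'⟩
  · rintro ⟨e, he, rfl⟩
    have he : ∀ i, e i = 0 ∨ e i = 1 := by simpa using he
    obtain ⟨τ, h1, h2⟩ := exists_perm m e he
    refine ⟨τ, ?_, h1⟩
    rw [Set.mem_ofPred_eq, avoid_iff]
    intro i j k hij hjk
    cases k using Fin.cases with
    | zero => simp at hjk
    | succ k =>
      have ha := h2 i k (hij.trans hjk)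
      have hb := h2 j k hjk
      rcases he k with h | h
      · exact ⟨fun hc => absurd hc.1 (not_lt.2 (ha.2 h).le), fun hc => absurd hc.1 (not_lt.2 (hb.2 h).le)⟩
      · exact ⟨fun hc => absurd hc.2 (not_lt.2 (hb.1 h).le), fun hc => absurd hc.2 (not_lt.2 (ha.1 h).le)⟩

theorem P_eq (m : ℕ) : P132312 (m+1) = cubeMap m '' (Set.univ.pi fun _ => Set.Icc (0:ℝ) 1) := by
  rw [P132312, vertices_eq, ← AffineMap.image_convexHull, convexHull_pi]
  simp [convexHull_pair, segment_eq_Icc]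

/-- Partial sums. -/
def partB {R : Type*} [CommRing R] (m : ℕ) (x : Fin (m+1) → R) (k : ℕ) : R :=
  ∑ j ∈ Finset.univ.filter (fun j : Fin (m+1) => (j:ℕ) < k), ((m:R) + 1 - ((j:ℕ):R) - x j)

theorem partB_zero {R : Type*} [CommRing R] (m : ℕ) (x : Fin (m+1) → R) : partB m x 0 = 0 := by
  simp [partB]

theorem partB_succ {R : Type*} [CommRing R] (m : ℕ) (x : Fin (m+1) → R) (k : ℕ) (h : k < m+1) :
    partB m x (k+1) = partB m x k + ((m:R) + 1 - k - x ⟨k, h⟩) := by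
  rw [partB, partB]
  have : Finset.univ.filter (fun i : Fin (m+1) => (i:ℕ) < k+1) =
      insert ⟨k, h⟩ (Finset.univ.filter (fun i : Fin (m+1) => (i:ℕ) < k)) := by
    ext i
    simp [Fin.ext_iff]
    omega
  rw [this, Finset.sum_insert (by simp)]
  ring

theorem partB_cast (m : ℕ) (x : Fin (m+1) → ℤ) (k : ℕ) :
    partB m (fun i => (x i : ℝ)) k = ((partB m x k : ℤ) : ℝ) := by
  simp only [partB]
  push_cast
  rfl

theorem partB_cubeMap (m : ℕ) (e : Fin m → ℝ) (k : ℕ) (h : k ≤ m+1) :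
    partB m (cubeMap m e) k = k * tailS m (k-1) e := by
  induction k with
  | zero => simp [partB_zero]
  | succ k ih =>
    rw [partB_succ m _ k (by omega), ih (by omega), cubeMap_apply]
    simp
    ring

/-- Left inverse of `cubeMap`. -/
noncomputable def cubeInv (m : ℕ) (x : Fin (m+1) → ℝ) : Fin m → ℝ := fun i =>
  partB m x (i+1) / ((i:ℕ)+1) - partB m x (i+2) / ((i:ℕ)+2)

theorem cubeInv_cubeMap (m : ℕ) (e : Fin m → ℝ) : cubeInv m (cubeMap m e) = e := by
  funext i
  rw [cubeInv, partB_cubeMap m e _ (by omega), partB_cubeMap m e _ (by omega)]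
  have := tailS_succ m i i.2 e
  simp only [Nat.add_sub_cancel, show (i:ℕ) + 2 - 1 = i + 1 by omega, this, Fin.eta]
  push_cast
  field_simp
  ring

theorem cubeMap_cubeInv (m : ℕ) (x : Fin (m+1) → ℝ) (hx : partB m x (m+1) = 0) :
    cubeMap m (cubeInv m x) = x := by
  have hS : ∀ d k, k + d = m → tailS m k (cubeInv m x) = partB m x (k+1) / (k+1) := by
    intro d
    induction d with
    | zero =>
      intro k hk
      rw [tailS_top m k (by omega), show k = m by omega, hx]; simp
    | succ d ih =>
      intro k hk
      rw [tailS_succ m k (by omega), ih (k+1) (by omega), cubeInv]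
      push_cast
      ring
  funext j
  rw [cubeMap_apply, hS (m - j) j (by omega)]
  have h2 : ((j:ℕ):ℝ) * tailS m (j-1) (cubeInv m x) = partB m x j := by
    rcases Nat.eq_zero_or_pos (j:ℕ) with h | h
    · rw [h]; simp [partB_zero]
    · rw [hS (m - (j-1)) (j-1) (by omega)]
      have : (((j:ℕ)-1 : ℕ) : ℝ) + 1 = (j:ℕ) := by
        rw [Nat.cast_sub h]; push_cast; ring
      rw [this, Nat.sub_add_cancel h, mul_div_cancel₀]
      positivity
  rw [h2, partB_succ m x j j.2]
  field_simp
  ring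

theorem relint_eq (m : ℕ) : intrinsicInterior ℝ (P132312 (m+1)) =
    cubeMap m '' (Set.univ.pi fun _ => Set.Ioo (0:ℝ) 1) := by
  rw [P_eq]
  have hint : interior (Set.univ.pi fun _ : Fin m => Set.Icc (0:ℝ) 1) =
      Set.univ.pi fun _ => Set.Ioo (0:ℝ) 1 := by
    rw [interior_pi_set Set.finite_univ]
    simp
  rw [intInt_image (cubeMap m) ?_ (cubeInv m) ?_ (cubeInv_cubeMap m), hint]
  · rw [affineSpan_eq_top_of_nonempty_interior]
    rw [(convex_pi fun _ _ => convex_Icc _ _).convexHull_eq, hint]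
    exact ⟨fun _ => 1/2, fun _ _ => by norm_num⟩
  · exact (cubeMap m).continuous_of_finiteDimensional
  · unfold cubeInv partB
    fun_prop

theorem mem_relint_iff (m : ℕ) (x : Fin (m+1) → ℝ) : x ∈ intrinsicInterior ℝ (P132312 (m+1)) ↔
    partB m x (m+1) = 0 ∧ ∀ i : Fin m, 0 < cubeInv m x i ∧ cubeInv m x i < 1 := by
  rw [relint_eq]
  constructor
  · rintro ⟨e, he, rfl⟩
    rw [cubeInv_cubeMap, partB_cubeMap m e _ le_rfl, tailS_top m _ (by simp)]
    exact ⟨by simp, fun i => he i trivial⟩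
  · rintro ⟨h1, h2⟩
    exact ⟨cubeInv m x, fun i _ => h2 i, cubeMap_cubeInv m x h1⟩

theorem mem_relint_int (m : ℕ) (x : Fin (m+1) → ℤ) :
    (fun i => (x i : ℝ)) ∈ intrinsicInterior ℝ (P132312 (m+1)) ↔
    Good m 0 (fun j => if j ≤ m then partB m x (j+1) else 0) := by
  rw [mem_relint_iff]
  unfold Good
  have key : ∀ (j : ℕ) (a b : ℤ),
      (0 < (a:ℝ) / ((j:ℝ)+1) - b / ((j:ℝ)+2) ∧ (a:ℝ) / ((j:ℝ)+1) - b / ((j:ℝ)+2) < 1) ↔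
      0 < ((j:ℤ)+2) * a - (j+1) * b ∧ ((j:ℤ)+2) * a - (j+1) * b < (j+1)*(j+2) := by
    intro j a b
    have h : (a:ℝ) / ((j:ℝ)+1) - b / ((j:ℝ)+2) =
        ((((j:ℤ)+2) * a - (j+1) * b : ℤ) : ℝ) / ((((j:ℤ)+1)*(j+2) : ℤ) : ℝ) := by
      push_cast
      field_simp
    have hpos : (0:ℝ) < ((((j:ℤ)+1)*(j+2) : ℤ) : ℝ) := by push_cast; positivity
    rw [h, div_lt_one hpos, div_pos_iff_of_pos_right hpos, Int.cast_pos, Int.cast_lt]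
  constructor
  · rintro ⟨h1, h2⟩
    rw [partB_cast] at h1
    refine ⟨by simpa using h1, fun j hj => by simp; omega, fun j hj => ?_⟩
    have := h2 ⟨j, hj⟩
    simp only [cubeInv, partB_cast] at this
    rw [key] at this
    beta_reduce
    rw [if_pos (by omega), if_pos (by omega)]
    exact this
  · rintro ⟨h1, -, h3⟩
    refine ⟨by rw [partB_cast]; simpa using h1, fun i => ?_⟩
    have := h3 i i.2
    beta_reduce at this
    rw [if_pos (by omega), if_pos (by omega)] at this
    simp only [cubeInv, partB_cast]
    rw [key]
    exact this

theorem stmt4 (n : ℕ) (hn : 1 ≤ n) :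
    Set.ncard {x : Fin n → ℤ | (fun i => (x i : ℝ)) ∈ intrinsicInterior ℝ (P132312 n)} =
      Set.ncard {τ : Equiv.Perm (Fin (n - 1)) | ∀ i, τ i ≠ i} := by
  obtain ⟨m, rfl⟩ : ∃ m, n = m + 1 := ⟨n - 1, by omega⟩
  obtain ⟨t, ht, hcard⟩ := good_card m 0
  rw [if_pos (dvd_zero _)] at hcard
  have hR : Set.ncard {τ : Equiv.Perm (Fin (m + 1 - 1)) | ∀ i, τ i ≠ i} = numDerangements m := by
    rw [← card_derangements_fin_eq_numDerangements, ← Nat.card_eq_fintype_card]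
    rfl
  rw [hR, ← hcard, ← Set.ncard_coe_finset]
  refine Set.ncard_congr (fun x _ => fun j => if j ≤ m then partB m x (j+1) else 0) ?_ ?_ ?_
  · intro x hx
    exact (ht _).2 ((mem_relint_int m x).1 hx)
  · intro x y _ _ hxy
    have hB : ∀ k, k ≤ m + 1 → partB m x k = partB m y k := by
      intro k hk
      cases k with
      | zero => simp [partB_zero]
      | succ k =>
        have := congrFun hxy k
        simpa [show k ≤ m by omega] using this
    funext j
    have h1 := partB_succ m x j j.2
    have h2 := partB_succ m y j j.2
    rw [hB _ (by omega), hB _ (by omega)] at h1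
    simp only [Fin.eta] at h1 h2
    linarith
  · intro g hg
    have hg : Good m 0 g := (ht _).1 hg
    let x : Fin (m+1) → ℤ := fun j => (m:ℤ) + 1 - (j:ℕ) - (g j - if (j:ℕ) = 0 then 0 else g (j-1))
    have hB : ∀ k, k ≤ m → partB m x (k+1) = g k := by
      intro k
      induction k with
      | zero =>
        intro _
        rw [partB_succ m x 0 (by omega), partB_zero]
        simp [x]
      | succ k ih =>
        intro hk
        rw [partB_succ m x (k+1) (by omega), ih (by omega)]
        simp [x]
    have hx : (fun j => if j ≤ m then partB m x (j+1) else 0) = g := by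
      funext j
      split_ifs with h
      · exact hB j h
      · exact (hg.2.1 j (by omega)).symm
    refine ⟨x, ?_, hx⟩
    rw [Set.mem_ofPred_eq, mem_relint_int, hx]
    exact hg
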